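/- (Strong duality for altitude guarding) For every terrain T with altitude line A at height h, the minimum cardinality of a guard cover equals the maximum cardinality of a witness set: there exists m ∈ ℕ such that m is the least element of {k : ∃ finite guard cover G ⊆ A with Set.ncard G = k} and m is the greatest element of {k : ∃ finite witness set W ⊆ T with Set.ncard W = k}. -/

import Mathlib

open Set

/-- The terrain: union of the closed segments `[v i, v (i+1)]`, `i = 0, …, n-2`. -/
def terrain (n : ℕ) (hn : 2 ≤ n) (v : Fin n → ℝ × ℝ) : Set (ℝ × ℝ) :=
  ⋃ i : Fin (n - 1), segment ℝ (v (Fin.castLE (by omega) i)) (v (Fin.cast (by omega) i.succ))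

/-- A point `r` is on or above the terrain `T`. -/
def onAbove (T : Set (ℝ × ℝ)) (r : ℝ × ℝ) : Prop :=
  ∀ t ∈ T, t.1 = r.1 → t.2 ≤ r.2

/-- `p` sees `q` (w.r.t. terrain `T`): every point of the segment `[p,q]` is on or above `T`. -/
def seesT (T : Set (ℝ × ℝ)) (p q : ℝ × ℝ) : Prop :=
  ∀ x ∈ segment ℝ p q, onAbove T x

/-- The altitude line at height `h`: the segment from `((v 0).1, h)` to `((v (n-1)).1, h)`. -/
def altLine (n : ℕ) (hn : 2 ≤ n) (v : Fin n → ℝ × ℝ) (h : ℝ) : Set (ℝ × ℝ) :=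
  segment ℝ ((v ⟨0, by omega⟩).1, h) ((v ⟨n - 1, by omega⟩).1, h)

/-- Visibility region on the terrain of a point `g` of the altitude line. -/
def visT (n : ℕ) (hn : 2 ≤ n) (v : Fin n → ℝ × ℝ) (g : ℝ × ℝ) : Set (ℝ × ℝ) :=
  {q | q ∈ terrain n hn v ∧ seesT (terrain n hn v) g q}

/-- Visibility region on the altitude line of a point `w` of the terrain. -/
def visA (n : ℕ) (hn : 2 ≤ n) (v : Fin n → ℝ × ℝ) (h : ℝ) (w : ℝ × ℝ) : Set (ℝ × ℝ) :=
  {p | p ∈ altLine n hn v h ∧ seesT (terrain n hn v) w p}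

/-!
Turning visibility around, a guard cover is a set of points of the altitude line that pierces the
family of regions `V_A(w)`, `w ∈ T`, and a witness set is a subfamily of pairwise disjoint regions.
Every terrain point higher than `w` blocks an open half-line of the altitude line from `w`, so
`V_A(w)` is a compact interval, and the points above the vertices pierce all of these intervals.
For compact intervals pierced by finitely many points, the greedy algorithm is optimal: stab at the
infimum `c` of the right endpoints and recurse on the intervals lying beyond `c`. The intervals of a
packing found by the recursion have a lower bound beyond `c`, so some interval ends before it and
enlarges the packing by one.
-/

section Piercing

variable {ι α : Type*} {I : ι → Set α} {S : Set ι}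

/-- `G` is a piercing set (transversal) of the family `I` over the index set `S`: it meets every
member. Guard covers are the piercing sets of the visibility regions on the altitude line. -/
def Pierces (G : Set α) (I : ι → Set α) (S : Set ι) : Prop :=
  ∀ w ∈ S, (I w ∩ G).Nonempty

theorem Pierces.inter {G A : Set α} (hG : Pierces G I S) (hA : ∀ w ∈ S, I w ⊆ A) :
    Pierces (G ∩ A) I S := fun w hw ↦
  let ⟨x, hxI, hxG⟩ := hG w hw
  ⟨x, hxI, hxG, hA w hw hxI⟩

theorem Pierces.ncard_le {G : Set α} (hG : Pierces G I S) (hfin : G.Finite) {W : Set ι}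
    (hWS : W ⊆ S) (hW : W.PairwiseDisjoint I) : W.ncard ≤ G.ncard := by
  have hstab : ∀ w : W, (I w ∩ G).Nonempty := fun w ↦ hG w (hWS w.2)
  choose f hfI hfG using hstab
  have hf : Function.Injective f := fun w w' h ↦ Subtype.ext <|
    hW.elim_set w.2 w'.2 (f w) (hfI w) (h ▸ hfI w')
  have := hfin.to_subtype
  exact Nat.card_le_card_of_injective (fun w ↦ (⟨f w, hfG w⟩ : G))
    fun w w' h ↦ hf (congrArg Subtype.val h)

theorem exists_isLeast_isGreatest_of_ncard_le {A G : Set α} {W : Set ι}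
    (hA : ∀ w ∈ S, I w ⊆ A) (hGfin : G.Finite) (hG : Pierces G I S) (hWfin : W.Finite)
    (hWS : W ⊆ S) (hW : W.PairwiseDisjoint I) (hcard : G.ncard ≤ W.ncard) :
    ∃ m : ℕ,
      IsLeast {k | ∃ G : Set α, G.Finite ∧ G ⊆ A ∧ Pierces G I S ∧ G.ncard = k} m ∧
      IsGreatest {k | ∃ W : Set ι, W.Finite ∧ W ⊆ S ∧ W.PairwiseDisjoint I ∧ W.ncard = k} m := by
  have hGA : Pierces (G ∩ A) I S := hG.inter hA
  have hGAfin : (G ∩ A).Finite := hGfin.inter_of_left A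
  have hGA_le : (G ∩ A).ncard ≤ W.ncard := (ncard_le_ncard inter_subset_left hGfin).trans hcard
  refine ⟨W.ncard, ⟨⟨G ∩ A, hGAfin, inter_subset_right, hGA, ?_⟩, ?_⟩, ⟨W, hWfin, hWS, hW, rfl⟩, ?_⟩
  · exact hGA_le.antisymm (hGA.ncard_le hGAfin hWS hW)
  · rintro _ ⟨G', hG'fin, -, hG', rfl⟩
    exact hG'.ncard_le hG'fin hWS hW
  · rintro _ ⟨W', -, hW'S, hW', rfl⟩
    exact (hGA.ncard_le hGAfin hW'S hW').trans hGA_le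

end Piercing

section CompactIntervals

variable {ι α : Type*} [ConditionallyCompleteLinearOrder α] [TopologicalSpace α] [OrderTopology α]
  {I : ι → Set α} {S : Set ι}

theorem exists_mem_forall_lt_of_isCompact {B K : Set α} (hB : B.Nonempty) (hK : IsCompact K)
    (hlt : ∀ x ∈ K, sInf B < x) : ∃ b ∈ B, ∀ x ∈ K, b < x := by
  rcases K.eq_empty_or_nonempty with rfl | hne
  · exact hB.imp fun b hb ↦ ⟨hb, by simp⟩
  · obtain ⟨b, hb, hbK⟩ := exists_lt_of_csInf_lt hB (hlt _ (hK.sInf_mem hne))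
    exact ⟨b, hb, fun x hx ↦ hbK.trans_le (csInf_le hK.bddBelow hx)⟩

theorem exists_forall_lt_of_sInf_image_sSup_lt (hcpt : ∀ w ∈ S, IsCompact (I w))
    (hS : S.Nonempty) {K : Set α} (hK : IsCompact K)
    (hlt : ∀ x ∈ K, sInf ((fun w ↦ sSup (I w)) '' S) < x) :
    ∃ u ∈ S, ∀ y ∈ I u, ∀ x ∈ K, y < x := by
  obtain ⟨_, ⟨u, hu, rfl⟩, huK⟩ := exists_mem_forall_lt_of_isCompact (hS.image _) hK hlt
  exact ⟨u, hu, fun y hy x hx ↦ (le_csSup (hcpt u hu).bddAbove hy).trans_lt (huK x hx)⟩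

theorem Pierces.exists_le_sInf_image_sSup {P : Set α} (hP : Pierces P I S) (hfin : P.Finite)
    (hcpt : ∀ w ∈ S, IsCompact (I w)) (hS : S.Nonempty) :
    ∃ p ∈ P, p ≤ sInf ((fun w ↦ sSup (I w)) '' S) := by
  by_contra! hlt
  obtain ⟨u, hu, hlow⟩ := exists_forall_lt_of_sInf_image_sSup_lt hcpt hS hfin.isCompact hlt
  obtain ⟨x, hxI, hxP⟩ := hP u hu
  exact (hlow x hxI x hxP).false

theorem Pierces.insert_sInf_image_sSup {P G : Set α} (hP : Pierces P I S) (hfin : P.Finite)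
    (hcpt : ∀ w ∈ S, IsCompact (I w)) (hconn : ∀ w ∈ S, (I w).OrdConnected)
    (hG : Pierces G I {w ∈ S | ∀ x ∈ I w, sInf ((fun w ↦ sSup (I w)) '' S) < x}) :
    Pierces (insert (sInf ((fun w ↦ sSup (I w)) '' S)) G) I S := by
  intro w hw
  have hbdd : BddBelow ((fun w ↦ sSup (I w)) '' S) := by
    obtain ⟨m, hm⟩ : BddBelow P := hfin.bddBelow
    refine ⟨m, forall_mem_image.2 fun u hu ↦ ?_⟩
    obtain ⟨x, hxI, hxP⟩ := hP u hu
    exact (hm hxP).trans (le_csSup (hcpt u hu).bddAbove hxI)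
  by_cases hbeyond : ∀ x ∈ I w, sInf ((fun w ↦ sSup (I w)) '' S) < x
  · exact (hG w ⟨hw, hbeyond⟩).mono (inter_subset_inter_right _ (subset_insert _ _))
  · push Not at hbeyond
    obtain ⟨x, hx, hxle⟩ := hbeyond
    have hmax : sSup (I w) ∈ I w := (hcpt w hw).sSup_mem ⟨x, hx⟩
    exact ⟨_, (hconn w hw).out hx hmax ⟨hxle, csInf_le hbdd (mem_image_of_mem _ hw)⟩,
      mem_insert _ _⟩

theorem exists_pierces_pairwiseDisjoint_card_le {P : Finset α} (hP : Pierces (P : Set α) I S)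
    (hcpt : ∀ w ∈ S, IsCompact (I w)) (hconn : ∀ w ∈ S, (I w).OrdConnected) :
    ∃ (G : Finset α) (W : Finset ι), Pierces (G : Set α) I S ∧ (W : Set ι) ⊆ S ∧
      (W : Set ι).PairwiseDisjoint I ∧ G.card ≤ W.card := by
  classical
  induction P using Finset.strongInduction generalizing S with
  | H P ih =>
    rcases S.eq_empty_or_nonempty with rfl | hS
    · exact ⟨∅, ∅, by simp [Pierces], by simp, by simp, le_rfl⟩
    set c := sInf ((fun w ↦ sSup (I w)) '' S)
    obtain ⟨p, hp, hpc⟩ := hP.exists_le_sInf_image_sSup P.finite_toSet hcpt hS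
    have hPerase : Pierces (P.erase p : Set α) I {w ∈ S | ∀ x ∈ I w, c < x} := by
      rintro w ⟨hw, hbeyond⟩
      obtain ⟨x, hxI, hxP⟩ := hP w hw
      exact ⟨x, hxI, Finset.mem_erase.2 ⟨(hpc.trans_lt (hbeyond x hxI)).ne', hxP⟩⟩
    obtain ⟨G, W, hG, hWS, hW, hcard⟩ := ih _ (Finset.erase_ssubset hp) hPerase
      (fun w hw ↦ hcpt w hw.1) (fun w hw ↦ hconn w hw.1)
    have hK : IsCompact (⋃ w ∈ W, I w) := W.isCompact_biUnion fun w hw ↦ hcpt w (hWS hw).1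
    obtain ⟨u, hu, hlow⟩ := exists_forall_lt_of_sInf_image_sSup_lt hcpt hS hK fun x hx ↦ by
      obtain ⟨w, hw, hx⟩ := mem_iUnion₂.1 hx
      exact (hWS hw).2 x hx
    have hdisj : ∀ w ∈ W, Disjoint (I u) (I w) := fun w hw ↦
      disjoint_left.2 fun x hxu hxw ↦ (hlow x hxu x (mem_biUnion hw hxw)).false
    have huW : u ∉ W := fun h ↦ ((hP u hu).mono inter_subset_left).ne_empty
      (disjoint_self.1 (hdisj u h))
    refine ⟨insert c G, insert u W, ?_, ?_, ?_, ?_⟩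
    · rw [Finset.coe_insert]
      exact hP.insert_sInf_image_sSup P.finite_toSet hcpt hconn hG
    · rw [Finset.coe_insert]
      exact insert_subset hu fun w hw ↦ (hWS hw).1
    · rw [Finset.coe_insert]
      exact hW.insert fun w hw _ ↦ hdisj w hw
    · rw [Finset.card_insert_of_notMem huW]
      exact (Finset.card_insert_le c G).trans (Nat.succ_le_succ hcard)

end CompactIntervals

section Visibility

-- The only candidate is `t = d / e`; its denominator is cleared without fixing the sign of `e`.
theorem forall_mem_Icc_eq_mul_imp_le_iff {𝕜 : Type*} [Field 𝕜] [LinearOrder 𝕜]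
    [IsStrictOrderedRing 𝕜] {c d e k : 𝕜} (hc : 0 ≤ c) (hck : c ≤ k) (hd : d ≠ 0) :
    (∀ t ∈ Icc (0 : 𝕜) 1, d = t * e → c ≤ t * k) ↔ c * (d * e) ≤ k * d ^ 2 := by
  constructor
  · intro H
    rcases le_or_gt (d * e) (d ^ 2) with hle | hlt
    · calc c * (d * e) ≤ c * d ^ 2 := by gcongr
        _ ≤ k * d ^ 2 := by gcongr
    · have hde : 0 < d * e := (sq_nonneg d).trans_lt hlt
      have he : e ≠ 0 := right_ne_zero_of_mul hde.ne'
      have ht : d / e = d ^ 2 / (d * e) := by field_simp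
      have ht_mem : d / e ∈ Icc (0 : 𝕜) 1 := by
        rw [ht]
        exact ⟨by positivity, (div_le_one hde).2 hlt.le⟩
      have hct : c ≤ d / e * k := H _ ht_mem (div_mul_cancel₀ d he).symm
      rwa [ht, div_mul_eq_mul_div, le_div_iff₀ hde, mul_comm (d ^ 2)] at hct
  · rintro H t ht rfl
    have ht_pos : 0 < t := ht.1.lt_of_ne' (left_ne_zero_of_mul hd)
    have he : e ≠ 0 := right_ne_zero_of_mul hd
    refine le_of_mul_le_mul_right ?_ (by positivity : 0 < t * e ^ 2)
    calc c * (t * e ^ 2) = c * (t * e * e) := by ring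
      _ ≤ k * (t * e) ^ 2 := H
      _ = t * k * (t * e ^ 2) := by ring

variable {T : Set (ℝ × ℝ)} {h : ℝ} {w : ℝ × ℝ}

theorem seesT_comm {p q : ℝ × ℝ} : seesT T p q ↔ seesT T q p := by
  rw [seesT, seesT, segment_symm]

theorem onAbove_of_mem (hT : T.InjOn Prod.fst) (hw : w ∈ T) : onAbove T w :=
  fun _ ht hfst ↦ (congrArg Prod.snd (hT ht hw hfst)).le

theorem seesT_iff_forall_eq_mul_imp_le {x : ℝ} : seesT T w (x, h) ↔
    ∀ τ ∈ T, ∀ t ∈ Icc (0 : ℝ) 1, τ.1 - w.1 = t * (x - w.1) → τ.2 - w.2 ≤ t * (h - w.2) := by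
  simp only [seesT, onAbove, segment_eq_image', forall_mem_image, Prod.fst_add, Prod.snd_add,
    Prod.smul_fst, Prod.smul_snd, Prod.fst_sub, Prod.snd_sub, smul_eq_mul, sub_eq_iff_eq_add',
    sub_le_iff_le_add']
  exact ⟨fun H τ hτ t ht ↦ H ht τ hτ, fun H t ht τ hτ ↦ H τ hτ t ht⟩

-- The sight line to `(p.1, h)` at parameter `t` is above the point of `[w, p]` at parameter `t`.
theorem seesT_of_segment_subset {p : ℝ × ℝ} (hT : T.InjOn Prod.fst) (hseg : segment ℝ w p ⊆ T)
    (hp : p.2 ≤ h) : seesT T w (p.1, h) := by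
  rw [seesT_iff_forall_eq_mul_imp_le]
  intro τ hτ t ht hfst
  have hmem : w + t • (p - w) ∈ T := hseg (segment_eq_image' ℝ w p ▸ mem_image_of_mem _ ht)
  have hτ_eq : τ = w + t • (p - w) := hT hτ hmem (sub_eq_iff_eq_add'.1 hfst)
  calc τ.2 - w.2 = t * (p.2 - w.2) := sub_eq_iff_eq_add'.2 (congrArg Prod.snd hτ_eq)
    _ ≤ t * (h - w.2) := by gcongr; exact ht.1

-- For each `τ` the condition is linear in `x`: it keeps `x` in a closed half-line.
theorem seesT_iff_forall_mul_le (hT : ∀ τ ∈ T, τ.2 ≤ h) (hw : onAbove T w) (hwh : w.2 ≤ h)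
    {x : ℝ} : seesT T w (x, h) ↔ ∀ τ ∈ T, w.2 < τ.2 →
      (τ.2 - w.2) * ((τ.1 - w.1) * (x - w.1)) ≤ (h - w.2) * (τ.1 - w.1) ^ 2 := by
  rw [seesT_iff_forall_eq_mul_imp_le]
  refine forall₂_congr fun τ hτ ↦ ?_
  rcases le_or_gt τ.2 w.2 with hle | hlt
  · exact iff_of_true (fun t ht _ ↦ (sub_nonpos.2 hle).trans (mul_nonneg ht.1 (sub_nonneg.2 hwh)))
      fun hlt ↦ absurd hlt hle.not_gt
  · have hne : τ.1 - w.1 ≠ 0 := fun h0 ↦ (hw τ hτ (sub_eq_zero.1 h0)).not_gt hlt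
    rw [forall_prop_of_true hlt]
    exact forall_mem_Icc_eq_mul_imp_le_iff (sub_nonneg.2 hlt.le) (sub_le_sub_right (hT τ hτ) _) hne

theorem isClosed_setOf_seesT (hT : ∀ τ ∈ T, τ.2 ≤ h) (hw : onAbove T w) (hwh : w.2 ≤ h) :
    IsClosed {x | seesT T w (x, h)} := by
  simp only [seesT_iff_forall_mul_le hT hw hwh, ofPred_forall]
  exact isClosed_biInter fun τ _ ↦ isClosed_iInter fun _ ↦ isClosed_le (by fun_prop) (by fun_prop)

theorem ordConnected_setOf_seesT (hT : ∀ τ ∈ T, τ.2 ≤ h) (hw : onAbove T w) (hwh : w.2 ≤ h) :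
    {x | seesT T w (x, h)}.OrdConnected := by
  simp only [seesT_iff_forall_mul_le hT hw hwh]
  refine ⟨fun x hx z hz y ⟨hxy, hyz⟩ τ hτ hlt ↦ ?_⟩
  have hpos := sub_nonneg.2 hlt.le
  rcases le_total 0 (τ.1 - w.1) with hd | hd
  · refine le_trans ?_ (hz τ hτ hlt)
    gcongr
  · refine le_trans (mul_le_mul_of_nonneg_left ?_ hpos) (hx τ hτ hlt)
    exact mul_le_mul_of_nonpos_left (sub_le_sub_right hxy _) hd

end Visibility

theorem injOn_fst_segment {𝕜 E F : Type*} [Field 𝕜] [LinearOrder 𝕜] [IsStrictOrderedRing 𝕜]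
    [AddCommGroup E] [Module 𝕜 E] [AddCommGroup F] [Module 𝕜 F] {p q : E × F} (hpq : p.1 ≠ q.1) :
    (segment 𝕜 p q).InjOn Prod.fst := by
  rw [segment_eq_image_lineMap]
  rintro _ ⟨s, -, rfl⟩ _ ⟨t, -, rfl⟩ hst
  rw [AffineMap.fst_lineMap, AffineMap.fst_lineMap] at hst
  rw [AffineMap.lineMap_injective 𝕜 hpq hst]

section Terrain

variable {n : ℕ} {hn : 2 ≤ n} {v : Fin n → ℝ × ℝ} {h : ℝ} {w : ℝ × ℝ}

theorem injOn_fst_terrain (hmono : StrictMono fun i ↦ (v i).1) :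
    (terrain n hn v).InjOn Prod.fst := by
  have hfst : ∀ i j : Fin n, i < j → ∀ p ∈ segment ℝ (v i) (v j), p.1 ∈ Icc (v i).1 (v j).1 :=
    fun i j hij p hp ↦ segment_subset_Icc (hmono hij).le (Prod.segment_subset _ _ hp).1
  have hinj : ∀ i j : Fin n, i < j → (segment ℝ (v i) (v j)).InjOn Prod.fst :=
    fun i j hij ↦ injOn_fst_segment (hmono hij).ne
  have hedge : ∀ i : Fin (n - 1), Fin.castLE (by omega) i < Fin.cast (m := n) (by omega) i.succ :=
    fun i ↦ Fin.lt_def.2 (by simp)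
  intro p hp q hq hpq
  obtain ⟨i, hpi⟩ := mem_iUnion.1 hp
  obtain ⟨j, hqj⟩ := mem_iUnion.1 hq
  wlog hij : i ≤ j generalizing i j p q
  · exact (this hq hp hpq.symm j hqj i hpi (le_of_not_ge hij)).symm
  rcases hij.eq_or_lt with rfl | hij
  · exact hinj _ _ (hedge i) hpi hqj hpq
  -- Points over the same abscissa on different edges are both the common endpoint of the edges.
  have hvle : (v (Fin.cast (by omega) i.succ)).1 ≤ (v (Fin.castLE (by omega) j)).1 :=
    hmono.monotone (Fin.le_def.2 (by simpa using hij))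
  have hp_le := (hfst _ _ (hedge i) p hpi).2
  have hq_ge := (hfst _ _ (hedge j) q hqj).1
  have hpv := hinj _ _ (hedge i) hpi (right_mem_segment ℝ _ _) (by linarith)
  have hqv := hinj _ _ (hedge j) hqj (left_mem_segment ℝ _ _) (by linarith)
  rw [hpv, hqv]
  exact congrArg v (hmono.injective (by linarith))

theorem snd_le_of_mem_terrain (hh : ∀ i, (v i).2 ≤ h) (hw : w ∈ terrain n hn v) : w.2 ≤ h := by
  obtain ⟨i, hw⟩ := mem_iUnion.1 hw
  exact (convex_Iic h).segment_subset (hh _) (hh _) (Prod.segment_subset _ _ hw).2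

theorem mk_mem_altLine (hmono : Monotone fun i ↦ (v i).1) {x : ℝ} :
    (x, h) ∈ altLine n hn v h ↔ x ∈ Icc (v ⟨0, by omega⟩).1 (v ⟨n - 1, by omega⟩).1 := by
  rw [altLine, ← Prod.image_mk_segment_left, segment_eq_Icc (hmono (Fin.le_def.2 (by simp)))]
  simp

theorem snd_eq_of_mem_altLine {p : ℝ × ℝ} (hp : p ∈ altLine n hn v h) : p.2 = h := by
  simpa using (Prod.segment_subset _ _ hp).2

theorem visA_subset_altLine : visA n hn v h w ⊆ altLine n hn v h := fun _ hp ↦ hp.1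

/-- The visibility region `V_A(w)`, identified with a subset of the line by its abscissae. -/
def visAbscissae (n : ℕ) (hn : 2 ≤ n) (v : Fin n → ℝ × ℝ) (h : ℝ) (w : ℝ × ℝ) : Set ℝ :=
  {x | (x, h) ∈ visA n hn v h w}

theorem visAbscissae_eq_inter (hmono : Monotone fun i ↦ (v i).1) :
    visAbscissae n hn v h w =
      Icc (v ⟨0, by omega⟩).1 (v ⟨n - 1, by omega⟩).1 ∩ {x | seesT (terrain n hn v) w (x, h)} := by
  ext x
  exact and_congr_left' (mk_mem_altLine hmono)

theorem isCompact_visAbscissae (hmono : StrictMono fun i ↦ (v i).1)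
    (hh : ∀ i, (v i).2 ≤ h) (hw : w ∈ terrain n hn v) :
    IsCompact (visAbscissae n hn v h w) := by
  rw [visAbscissae_eq_inter hmono.monotone]
  exact isCompact_Icc.inter_right <| isClosed_setOf_seesT (fun _ ↦ snd_le_of_mem_terrain hh)
    (onAbove_of_mem (injOn_fst_terrain hmono) hw) (snd_le_of_mem_terrain hh hw)

theorem ordConnected_visAbscissae (hmono : StrictMono fun i ↦ (v i).1)
    (hh : ∀ i, (v i).2 ≤ h) (hw : w ∈ terrain n hn v) :
    (visAbscissae n hn v h w).OrdConnected := by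
  rw [visAbscissae_eq_inter hmono.monotone]
  exact ordConnected_Icc.inter <| ordConnected_setOf_seesT (fun _ ↦ snd_le_of_mem_terrain hh)
    (onAbove_of_mem (injOn_fst_terrain hmono) hw) (snd_le_of_mem_terrain hh hw)

theorem pierces_image_fst_vertices (hmono : StrictMono fun i ↦ (v i).1)
    (hh : ∀ i, (v i).2 ≤ h) :
    Pierces (Finset.univ.image fun i ↦ (v i).1 : Set ℝ)
      (visAbscissae n hn v h) (terrain n hn v) := by
  intro w hw
  obtain ⟨i, hi⟩ := mem_iUnion.1 hw
  set a : Fin n := Fin.castLE (by omega) i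
  have hseg : segment ℝ w (v a) ⊆ terrain n hn v :=
    ((convex_segment _ _).segment_subset hi (left_mem_segment ℝ _ _)).trans
      (subset_iUnion_of_subset i Subset.rfl)
  have ha : (v a).1 ∈ Icc (v ⟨0, by omega⟩).1 (v ⟨n - 1, by omega⟩).1 :=
    ⟨hmono.monotone (Fin.le_def.2 (Nat.zero_le _)),
      hmono.monotone (Fin.le_def.2 (Nat.le_sub_one_of_lt a.2))⟩
  exact ⟨(v a).1, ⟨(mk_mem_altLine hmono.monotone).2 ha,
    seesT_of_segment_subset (injOn_fst_terrain hmono) hseg (hh a)⟩, by simp⟩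

theorem Pierces.image_mk_visA {G : Set ℝ}
    (hG : Pierces G (visAbscissae n hn v h) (terrain n hn v)) :
    Pierces ((·, h) '' G) (visA n hn v h) (terrain n hn v) := fun w hw ↦
  let ⟨x, hxI, hxG⟩ := hG w hw
  ⟨(x, h), hxI, mem_image_of_mem _ hxG⟩

theorem pairwiseDisjoint_visA_of_visAbscissae {W : Set (ℝ × ℝ)}
    (hW : W.PairwiseDisjoint (visAbscissae n hn v h)) :
    W.PairwiseDisjoint (visA n hn v h) := by
  refine hW.imp fun w w' hdisj ↦ disjoint_left.2 fun p hp hp' ↦ ?_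
  obtain rfl := snd_eq_of_mem_altLine hp.1
  exact disjoint_left.1 hdisj hp hp'

theorem terrain_subset_biUnion_visT_iff {G : Set (ℝ × ℝ)} (hG : G ⊆ altLine n hn v h) :
    terrain n hn v ⊆ ⋃ g ∈ G, visT n hn v g ↔ Pierces G (visA n hn v h) (terrain n hn v) := by
  refine forall₂_congr fun w hw ↦ mem_iUnion₂.trans (exists_congr fun g ↦ ?_)
  constructor
  · rintro ⟨hg, -, hsee⟩
    exact ⟨⟨hG hg, seesT_comm.1 hsee⟩, hg⟩
  · rintro ⟨⟨-, hsee⟩, hg⟩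
    exact ⟨hg, hw, seesT_comm.1 hsee⟩

theorem pairwiseDisjoint_visA_iff {W : Set (ℝ × ℝ)} : W.PairwiseDisjoint (visA n hn v h) ↔
    ∀ w ∈ W, ∀ w' ∈ W, w ≠ w' → visA n hn v h w ∩ visA n hn v h w' = ∅ := by
  simp only [PairwiseDisjoint, Set.Pairwise, Function.onFun, disjoint_iff_inter_eq_empty]

end Terrain

theorem stmt_12 (n : ℕ) (hn : 2 ≤ n) (v : Fin n → ℝ × ℝ)
    (hmono : ∀ i j : Fin n, i < j → (v i).1 < (v j).1)
    (h : ℝ) (hh : ∀ i : Fin n, (v i).2 < h) :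
    ∃ m : ℕ,
      IsLeast {k : ℕ | ∃ G : Set (ℝ × ℝ), G.Finite ∧ G ⊆ altLine n hn v h ∧
        terrain n hn v ⊆ (⋃ g ∈ G, visT n hn v g) ∧ G.ncard = k} m ∧
      IsGreatest {k : ℕ | ∃ W : Set (ℝ × ℝ), W.Finite ∧ W ⊆ terrain n hn v ∧
        (∀ w ∈ W, ∀ w' ∈ W, w ≠ w' → visA n hn v h w ∩ visA n hn v h w' = ∅) ∧
        W.ncard = k} m := by
  have hmono' : StrictMono fun i ↦ (v i).1 := fun i j ↦ hmono i j
  have hh' : ∀ i, (v i).2 ≤ h := fun i ↦ (hh i).le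
  obtain ⟨G, W, hG, hWT, hW, hcard⟩ := exists_pierces_pairwiseDisjoint_card_le
    (pierces_image_fst_vertices (hn := hn) hmono' hh')
    (fun _ ↦ isCompact_visAbscissae hmono' hh')
    (fun _ ↦ ordConnected_visAbscissae hmono' hh')
  have hcard' : ((·, h) '' (G : Set ℝ)).ncard ≤ (W : Set (ℝ × ℝ)).ncard := by
    rw [← ncard_coe_finset, ← ncard_coe_finset] at hcard
    exact (ncard_image_le G.finite_toSet).trans hcard
  obtain ⟨m, hleast, hgreatest⟩ := exists_isLeast_isGreatest_of_ncard_le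
    (fun _ _ ↦ visA_subset_altLine) (G.finite_toSet.image _) hG.image_mk_visA
    W.finite_toSet hWT (pairwiseDisjoint_visA_of_visAbscissae hW) hcard'
  refine ⟨m, ?_, ?_⟩
  · convert hleast using 6 with _ G
    exact and_congr_right fun hGA ↦ and_congr_left' (terrain_subset_biUnion_visT_iff hGA)
  · simpa only [pairwiseDisjoint_visA_iff] using hgreatest
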